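/- arXiv:1404.0784 — 7 statements merged into one kernel-verified Lean document; each statement's English description precedes it below -/
import Mathlib

section
/- For any type U, any k : ℕ, any k-ary term function with constants f on U, any assignment x : Fin k → Set U, and any σ : Fin k → Bool, one has f(x) ∩ C_σ(x) = f(σ*) ∩ C_σ(x). -/
/-- The constituent `C_σ(x)`. -/
def constituent {U : Type*} {k : ℕ} (x : Fin k → Set U) (σ : Fin k → Bool) : Set U :=
  ⋂ i, if σ i = true then x i else (x i)ᶜ

/-- The 0-1 assignment `σ*` associated to a Boolean tuple `σ`. -/
def starAssign {U : Type*} {k : ℕ} (σ : Fin k → Bool) : Fin k → Set U :=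
  fun i => if σ i = true then Set.univ else ∅

/-- `k`-ary term functions with constants on `U`. -/
inductive IsTermFun (U : Type*) (k : ℕ) : ((Fin k → Set U) → Set U) → Prop
  | proj (i : Fin k) : IsTermFun U k (fun x => x i)
  | const (A : Set U) : IsTermFun U k (fun _ => A)
  | union {f g} : IsTermFun U k f → IsTermFun U k g → IsTermFun U k (fun x => f x ∪ g x)
  | inter {f g} : IsTermFun U k f → IsTermFun U k g → IsTermFun U k (fun x => f x ∩ g x)
  | compl {f} : IsTermFun U k f → IsTermFun U k (fun x => (f x)ᶜ)

/-! Union, intersection and complement act pointwise on `U`, so whether `u` lies in `f x` depends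
only on the set of `i` with `u ∈ x i`. On the constituent of `σ` that set is `{i | σ i = true}`,
which is also the one given by `σ*`. -/

section

variable {U : Type*} {k : ℕ}

theorem IsTermFun.mem_congr {f : (Fin k → Set U) → Set U} (hf : IsTermFun U k f)
    {x y : Fin k → Set U} {u : U} (hxy : ∀ i, u ∈ x i ↔ u ∈ y i) : u ∈ f x ↔ u ∈ f y := by
  induction hf with
  | proj i => exact hxy i
  | const A => exact Iff.rfl
  | union _ _ ihf ihg => exact or_congr ihf ihg
  | inter _ _ ihf ihg => exact and_congr ihf ihg
  | compl _ ihf => exact not_congr ihf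

theorem mem_constituent_iff {x : Fin k → Set U} {σ : Fin k → Bool} {u : U} :
    u ∈ constituent x σ ↔ ∀ i, u ∈ x i ↔ σ i = true := by
  refine Set.mem_iInter.trans (forall_congr' fun i => ?_)
  cases σ i <;> simp

theorem mem_starAssign_iff {σ : Fin k → Bool} {i : Fin k} {u : U} :
    u ∈ starAssign σ i ↔ σ i = true := by
  cases h : σ i <;> simp [starAssign, h]

end

theorem termFun_inter_constituent (U : Type*) (k : ℕ)
    (f : (Fin k → Set U) → Set U) (hf : IsTermFun U k f)
    (x : Fin k → Set U) (σ : Fin k → Bool) :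
    f x ∩ constituent x σ = f (starAssign σ) ∩ constituent x σ := by
  ext u
  refine and_congr_left fun hu => hf.mem_congr fun i => ?_
  exact (mem_constituent_iff.mp hu i).trans mem_starAssign_iff.symm
end

section
/- (Equational Conclusion) Let k, m, n : ℕ, S : Fin m → Set (Fin k → Bool), Q : Fin n → Set (Fin k → Bool), and T : Set (Fin k → Bool). Suppose the premiss list is satisfiable: there exist a nonempty type U and an assignment x : Fin k → Set U with P_{S i}(x) = ∅ for all i and P_{Q j}(x) ≠ ∅ for all j. Then the argument with premises P_{S i}(x) = ∅ (all i) and P_{Q j}(x) ≠ ∅ (all j) and conclusion P_T(x) = ∅ is PSA-valid if and only if the purely equational argument with premises P_{S i}(x) = ∅ (all i) and conclusion P_T(x) = ∅ is PSA-valid. -/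
/-- The term function associated to a set `S` of constituent indices:
`P_S(x) = ⋃ σ ∈ S, C_σ(x)`. -/
def PSfun {U : Type*} {k : ℕ} (S : Set (Fin k → Bool)) (x : Fin k → Set U) : Set U :=
  ⋃ σ ∈ S, constituent x σ

/-! Boolean terms are evaluated pointwise, so in the disjoint sum of two assignments a term is empty
exactly when it is empty in both summands. Adjoining a model of all the premises to a model of the
equational premises alone therefore preserves the equations, makes every inequation true, and
keeps any counterexample to the conclusion. -/

theorem preimage_constituent {U V : Type*} {k : ℕ} (f : U → V) (x : Fin k → Set V)
    (σ : Fin k → Bool) :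
    f ⁻¹' constituent x σ = constituent (fun i => f ⁻¹' x i) σ := by
  simp only [constituent, Set.preimage_iInter, apply_ite (f ⁻¹' ·), Set.preimage_compl]

theorem preimage_PSfun {U V : Type*} {k : ℕ} (f : U → V) (S : Set (Fin k → Bool))
    (x : Fin k → Set V) :
    f ⁻¹' PSfun S x = PSfun S (fun i => f ⁻¹' x i) := by
  simp only [PSfun, Set.preimage_iUnion, preimage_constituent]

/-- The disjoint sum of two assignments: on the universe `U ⊕ V` it restricts to `x` on the copy
of `U` and to `y` on the copy of `V`. It merges two models of an argument into one. -/
def sumAssignment {ι U V : Type*} (x : ι → Set U) (y : ι → Set V) : ι → Set (U ⊕ V) :=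
  fun i => Sum.inl '' x i ∪ Sum.inr '' y i

theorem preimage_inl_sumAssignment {ι U V : Type*} (x : ι → Set U) (y : ι → Set V) (i : ι) :
    Sum.inl ⁻¹' sumAssignment x y i = x i := by
  rw [sumAssignment, Set.preimage_union, Set.preimage_image_eq _ Sum.inl_injective,
    Set.preimage_inl_image_inr, Set.union_empty]

theorem preimage_inr_sumAssignment {ι U V : Type*} (x : ι → Set U) (y : ι → Set V) (i : ι) :
    Sum.inr ⁻¹' sumAssignment x y i = y i := by
  rw [sumAssignment, Set.preimage_union, Set.preimage_image_eq _ Sum.inr_injective,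
    Set.preimage_inr_image_inl, Set.empty_union]

theorem PSfun_sumAssignment {U V : Type*} {k : ℕ} (S : Set (Fin k → Bool)) (x : Fin k → Set U)
    (y : Fin k → Set V) :
    PSfun S (sumAssignment x y) = Sum.inl '' PSfun S x ∪ Sum.inr '' PSfun S y := by
  rw [← Set.image_preimage_inl_union_image_preimage_inr (PSfun S (sumAssignment x y))]
  simp only [preimage_PSfun, preimage_inl_sumAssignment, preimage_inr_sumAssignment]

theorem PSfun_sumAssignment_eq_empty {U V : Type*} {k : ℕ} {S : Set (Fin k → Bool)}
    {x : Fin k → Set U} {y : Fin k → Set V} :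
    PSfun S (sumAssignment x y) = ∅ ↔ PSfun S x = ∅ ∧ PSfun S y = ∅ := by
  rw [PSfun_sumAssignment, Set.union_empty_iff, Set.image_eq_empty, Set.image_eq_empty]

universe u in
theorem equational_conclusion_general {k : ℕ} {ι κ : Sort*} (S : ι → Set (Fin k → Bool))
    (Q : κ → Set (Fin k → Bool)) (T : Set (Fin k → Bool))
    (hsat : ∃ (V : Type u) (y : Fin k → Set V),
      (∀ i, PSfun (S i) y = ∅) ∧ (∀ j, PSfun (Q j) y ≠ ∅)) :
    (∀ U : Type u, Nonempty U → ∀ x : Fin k → Set U,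
      (∀ i, PSfun (S i) x = ∅) → (∀ j, PSfun (Q j) x ≠ ∅) → PSfun T x = ∅) ↔
    (∀ U : Type u, Nonempty U → ∀ x : Fin k → Set U,
      (∀ i, PSfun (S i) x = ∅) → PSfun T x = ∅) := by
  obtain ⟨V, y, hSy, hQy⟩ := hsat
  refine ⟨fun hvalid U _ x hSx => ?_, fun hvalid U hU x hSx _ => hvalid U hU x hSx⟩
  have hS : ∀ i, PSfun (S i) (sumAssignment x y) = ∅ :=
    fun i => PSfun_sumAssignment_eq_empty.mpr ⟨hSx i, hSy i⟩
  have hQ : ∀ j, PSfun (Q j) (sumAssignment x y) ≠ ∅ :=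
    fun j hj => hQy j (PSfun_sumAssignment_eq_empty.mp hj).2
  have hT : PSfun T (sumAssignment x y) = ∅ := hvalid (U ⊕ V) inferInstance _ hS hQ
  exact (PSfun_sumAssignment_eq_empty.mp hT).1

theorem equational_conclusion (k m n : ℕ) (S : Fin m → Set (Fin k → Bool))
    (Q : Fin n → Set (Fin k → Bool)) (T : Set (Fin k → Bool))
    (hsat : ∃ (U : Type) (_ : Nonempty U) (x : Fin k → Set U),
      (∀ i, PSfun (S i) x = ∅) ∧ (∀ j, PSfun (Q j) x ≠ ∅)) :
    (∀ (U : Type), Nonempty U → ∀ x : Fin k → Set U,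
      (∀ i, PSfun (S i) x = ∅) → (∀ j, PSfun (Q j) x ≠ ∅) → PSfun T x = ∅) ↔
    (∀ (U : Type), Nonempty U → ∀ x : Fin k → Set U,
      (∀ i, PSfun (S i) x = ∅) → PSfun T x = ∅) := by
  obtain ⟨V, _, y, hy⟩ := hsat
  exact equational_conclusion_general S Q T ⟨V, y, hy⟩
end

section
/- (Elimination and Solution Theorem) For any type U and any sets a, b, x : Set U, the equation (a ∩ x) ∪ (b ∩ xᶜ) = ∅ holds if and only if a ∩ b = ∅ and there exists z : Set U with x = (zᶜ ∩ b) ∪ (z ∩ aᶜ). -/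
/-!
The equation says precisely that `b ≤ x ≤ aᶜ`. It is therefore solvable if and only if the interval
`[b, aᶜ]` is nonempty, i.e. `a ⊓ b = ⊥`, and in that case `z ↦ (zᶜ ⊓ b) ⊔ (z ⊓ aᶜ)` is a retraction
of the whole algebra onto this interval, so its values are exactly the solutions.
-/

theorem compl_inf_sup_inf_eq_self_of_mem_Icc {H : Type*} [HeytingAlgebra H] {b c x : H}
    (hx : x ∈ Set.Icc b c) : (xᶜ ⊓ b) ⊔ (x ⊓ c) = x := by
  have compl_inf_lower : xᶜ ⊓ b = ⊥ := (disjoint_compl_left.mono_right hx.1).eq_bot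
  rw [compl_inf_lower, inf_eq_left.mpr hx.2, bot_sup_eq]

section BooleanAlgebra

variable {B : Type*} [BooleanAlgebra B]

theorem compl_inf_sup_inf_mem_Icc {b c : B} (hbc : b ≤ c) (z : B) :
    (zᶜ ⊓ b) ⊔ (z ⊓ c) ∈ Set.Icc b c := by
  constructor
  · calc
      b = (zᶜ ⊓ b) ⊔ (z ⊓ b) := by rw [← inf_sup_right, compl_sup_eq_top, top_inf_eq]
      _ ≤ (zᶜ ⊓ b) ⊔ (z ⊓ c) := by gcongr
  · exact sup_le (inf_le_right.trans hbc) inf_le_right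

theorem range_compl_inf_sup_inf {b c : B} (hbc : b ≤ c) :
    Set.range (fun z ↦ (zᶜ ⊓ b) ⊔ (z ⊓ c)) = Set.Icc b c :=
  Set.Subset.antisymm (Set.range_subset_iff.mpr (compl_inf_sup_inf_mem_Icc hbc))
    fun x hx ↦ ⟨x, compl_inf_sup_inf_eq_self_of_mem_Icc hx⟩

theorem inf_sup_inf_compl_eq_bot_iff_mem_Icc {a b x : B} :
    (a ⊓ x) ⊔ (b ⊓ xᶜ) = ⊥ ↔ x ∈ Set.Icc b aᶜ := by
  rw [sup_eq_bot_iff, ← disjoint_iff, ← disjoint_iff, disjoint_compl_right_iff,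
    ← le_compl_iff_disjoint_left, and_comm, Set.mem_Icc]

theorem elimination_and_solution_general (a b x : B) :
    (a ⊓ x) ⊔ (b ⊓ xᶜ) = ⊥ ↔ a ⊓ b = ⊥ ∧ ∃ z : B, x = (zᶜ ⊓ b) ⊔ (z ⊓ aᶜ) := by
  have consistent_iff : a ⊓ b = ⊥ ↔ b ≤ aᶜ := by
    rw [← disjoint_iff, le_compl_iff_disjoint_left]
  have parametrization (hba : b ≤ aᶜ) :
      x ∈ Set.Icc b aᶜ ↔ ∃ z : B, x = (zᶜ ⊓ b) ⊔ (z ⊓ aᶜ) := by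
    simp only [← range_compl_inf_sup_inf hba, Set.mem_range, eq_comm]
  rw [inf_sup_inf_compl_eq_bot_iff_mem_Icc, consistent_iff, ← and_congr_right parametrization]
  exact (and_iff_right_of_imp fun hx ↦ hx.1.trans hx.2).symm

end BooleanAlgebra

theorem elimination_and_solution (U : Type*) (a b x : Set U) :
    (a ∩ x) ∪ (b ∩ xᶜ) = ∅ ↔
      a ∩ b = ∅ ∧ ∃ z : Set U, x = (zᶜ ∩ b) ∪ (z ∩ aᶜ) :=
  elimination_and_solution_general a b x
end

section
/- (Eliminant, single variable) For any type U and any unary term function with constants f : Set U → Set U, there exists x : Set U with f(x) = ∅ if and only if f(Set.univ) ∩ f(∅) = ∅. -/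
/-- Unary term functions with constants on `U`. -/
inductive IsTermFun1 (U : Type*) : (Set U → Set U) → Prop
  | id : IsTermFun1 U (fun x => x)
  | const (A : Set U) : IsTermFun1 U (fun _ => A)
  | union {f g} : IsTermFun1 U f → IsTermFun1 U g → IsTermFun1 U (fun x => f x ∪ g x)
  | inter {f g} : IsTermFun1 U f → IsTermFun1 U g → IsTermFun1 U (fun x => f x ∩ g x)
  | compl {f} : IsTermFun1 U f → IsTermFun1 U (fun x => (f x)ᶜ)

/-!
A Boolean polynomial `f` respects the congruence `c ⊓ x = c ⊓ y` of every element `c`. Taking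
`y = ⊤`, `c = x` and then `y = ⊥`, `c = xᶜ` gives Boole's expansion `f x = f ⊤ ⊓ x ⊔ f ⊥ \ x`. So
`f x = ⊥` says that `x` contains `f ⊥` and is disjoint from `f ⊤`; if any `x` does so, then `f ⊥`
does.
-/

theorem exists_inf_sup_sdiff_eq_bot_iff {α : Type*} [GeneralizedBooleanAlgebra α] {a b : α} :
    (∃ x, a ⊓ x ⊔ b \ x = ⊥) ↔ Disjoint a b := by
  simp only [sup_eq_bot_iff, ← disjoint_iff, sdiff_eq_bot_iff]
  constructor
  · rintro ⟨x, disjoint_a_x, b_le_x⟩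
    exact disjoint_a_x.mono_right b_le_x
  · intro disjoint_a_b
    exact ⟨b, disjoint_a_b, le_rfl⟩

/-- Unary polynomial functions of a Boolean algebra, that is, its unary term functions with
constants. They extend `IsTermFun1` from power sets to arbitrary Boolean algebras. -/
inductive IsBooleanPolynomial {α : Type*} [BooleanAlgebra α] : (α → α) → Prop
  | id : IsBooleanPolynomial (fun x => x)
  | const (a : α) : IsBooleanPolynomial (fun _ => a)
  | sup {f g} : IsBooleanPolynomial f → IsBooleanPolynomial g →
      IsBooleanPolynomial (fun x => f x ⊔ g x)
  | inf {f g} : IsBooleanPolynomial f → IsBooleanPolynomial g →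
      IsBooleanPolynomial (fun x => f x ⊓ g x)
  | compl {f} : IsBooleanPolynomial f → IsBooleanPolynomial (fun x => (f x)ᶜ)

namespace IsBooleanPolynomial

variable {α : Type*} [BooleanAlgebra α] {f : α → α}

theorem inf_congr_right (hf : IsBooleanPolynomial f) {c x y : α} (h : c ⊓ x = c ⊓ y) :
    c ⊓ f x = c ⊓ f y := by
  induction hf with
  | id => exact h
  | const a => rfl
  | sup _ _ ihf ihg => rw [inf_sup_left, inf_sup_left, ihf, ihg]
  | inf _ _ ihf ihg => rw [inf_inf_distrib_left, ihf, ihg, ← inf_inf_distrib_left]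
  | compl _ ih =>
    rw [← sdiff_eq, ← sdiff_eq]
    exact sdiff_eq_sdiff_iff_inf_eq_inf.mpr ih

theorem boole_expansion (hf : IsBooleanPolynomial f) (x : α) : f x = f ⊤ ⊓ x ⊔ f ⊥ \ x := by
  have below_x : x ⊓ f x = x ⊓ f ⊤ := hf.inf_congr_right (by simp)
  have below_compl : xᶜ ⊓ f x = xᶜ ⊓ f ⊥ := hf.inf_congr_right (by simp)
  calc
    f x = x ⊓ f x ⊔ xᶜ ⊓ f x := by rw [← inf_sup_right, sup_compl_eq_top, top_inf_eq]
    _ = x ⊓ f ⊤ ⊔ xᶜ ⊓ f ⊥ := by rw [below_x, below_compl]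
    _ = f ⊤ ⊓ x ⊔ f ⊥ \ x := by rw [sdiff_eq, inf_comm x, inf_comm xᶜ]

end IsBooleanPolynomial

theorem IsTermFun1.isBooleanPolynomial {U : Type*} {f : Set U → Set U} (hf : IsTermFun1 U f) :
    IsBooleanPolynomial f := by
  induction hf with
  | id => exact .id
  | const A => exact .const A
  | union _ _ ihf ihg => exact ihf.sup ihg
  | inter _ _ ihf ihg => exact ihf.inf ihg
  | compl _ ih => exact ih.compl

theorem eliminant_single_variable_general {α : Type*} [BooleanAlgebra α] {f : α → α}
    (hf : IsBooleanPolynomial f) : (∃ x, f x = ⊥) ↔ f ⊤ ⊓ f ⊥ = ⊥ := by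
  calc
    (∃ x, f x = ⊥) ↔ ∃ x, f ⊤ ⊓ x ⊔ f ⊥ \ x = ⊥ :=
      exists_congr fun x => by rw [← hf.boole_expansion x]
    _ ↔ Disjoint (f ⊤) (f ⊥) := exists_inf_sup_sdiff_eq_bot_iff
    _ ↔ f ⊤ ⊓ f ⊥ = ⊥ := disjoint_iff

theorem eliminant_single_variable (U : Type*) (f : Set U → Set U)
    (hf : IsTermFun1 U f) :
    (∃ x : Set U, f x = ∅) ↔ f Set.univ ∩ f ∅ = ∅ :=
  eliminant_single_variable_general hf.isBooleanPolynomial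
end

section
/- (Boole's Elimination Theorem) For any type U, any k : ℕ, and any k-ary term function with constants f on U, there exists an assignment x : Fin k → Set U with f(x) = ∅ if and only if ⋂ (σ : Fin k → Bool), f(σ*) = ∅. -/
/-! A term function acts pointwise: at a point `u`, an assignment `x` only matters through the
Boolean tuple recording which `x i` contain `u`. So `⋂ σ, f (σ*)` is contained in every value of
`f`, and it is itself a value: choose at each `u` a tuple `σ` with `u ∉ f (σ*)` whenever there is
one, and glue these tuples to a single assignment. Thus it is the least value of `f`, and `f` takes
the value `∅` exactly when it is empty. -/

section Pointwise

variable {U ι : Type*} {f : (ι → Set U) → Set U}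

/-- The 0-1 assignment of a Boolean tuple over an arbitrary index type. The case `ι = Fin k` is
`starAssign`, definitionally. -/
def zeroOneAssign (σ : ι → Bool) : ι → Set U :=
  fun i => if σ i = true then Set.univ else ∅

theorem mem_zeroOneAssign {σ : ι → Bool} {i : ι} {u : U} :
    u ∈ (zeroOneAssign σ i : Set U) ↔ σ i = true := by
  simp [zeroOneAssign]

/-- A pointwise operation on sets: whether `u` lies in `f x` depends only on which of the sets `x i`
contain `u`. It makes the choice of an assignment a separate problem at each point. -/
def IsPointwise (f : (ι → Set U) → Set U) : Prop :=
  ∀ ⦃x y : ι → Set U⦄ ⦃u : U⦄, (∀ i, u ∈ x i ↔ u ∈ y i) → (u ∈ f x ↔ u ∈ f y)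

theorem IsTermFun.isPointwise {k : ℕ} {f : (Fin k → Set U) → Set U} (hf : IsTermFun U k f) :
    IsPointwise f := by
  intro x y u hxy
  induction hf with
  | proj i => exact hxy i
  | const A => exact Iff.rfl
  | union _ _ ihf ihg => exact or_congr ihf ihg
  | inter _ _ ihf ihg => exact and_congr ihf ihg
  | compl _ ihf => exact not_congr ihf

namespace IsPointwise

theorem mem_iff_mem_zeroOneAssign (hf : IsPointwise f) {x : ι → Set U} {u : U} {σ : ι → Bool}
    (hσ : ∀ i, u ∈ x i ↔ σ i = true) : u ∈ f x ↔ u ∈ f (zeroOneAssign σ) :=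
  hf fun i => (hσ i).trans mem_zeroOneAssign.symm

theorem iInter_zeroOneAssign_subset (hf : IsPointwise f) (x : ι → Set U) :
    ⋂ σ : ι → Bool, f (zeroOneAssign σ) ⊆ f x := by
  classical
  intro u hu
  exact (hf.mem_iff_mem_zeroOneAssign fun i => decide_eq_true_iff.symm).2
    (Set.mem_iInter.1 hu fun i => decide (u ∈ x i))

theorem exists_eq_iInter_zeroOneAssign (hf : IsPointwise f) :
    ∃ x, f x = ⋂ σ : ι → Bool, f (zeroOneAssign σ) := by
  have exists_minimizing (u : U) : ∃ σ : ι → Bool,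
      u ∈ f (zeroOneAssign σ) → ∀ τ : ι → Bool, u ∈ f (zeroOneAssign τ) := by
    by_contra! h
    obtain ⟨-, τ, hτ⟩ := h default
    exact hτ (h τ).1
  choose s hs using exists_minimizing
  let glued : ι → Set U := fun i => {u | s u i = true}
  have mem_glued (u : U) : u ∈ f glued ↔ u ∈ f (zeroOneAssign (s u)) :=
    hf.mem_iff_mem_zeroOneAssign fun _ => Iff.rfl
  refine ⟨glued, Set.Subset.antisymm (fun u hu => ?_) (hf.iInter_zeroOneAssign_subset glued)⟩
  exact Set.mem_iInter.2 (hs u ((mem_glued u).1 hu))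

theorem isLeast_range (hf : IsPointwise f) :
    IsLeast (Set.range f) (⋂ σ : ι → Bool, f (zeroOneAssign σ)) :=
  ⟨hf.exists_eq_iInter_zeroOneAssign, Set.forall_mem_range.2 hf.iInter_zeroOneAssign_subset⟩

end IsPointwise

theorem boole_elimination_general (hf : IsPointwise f) :
    (∃ x, f x = ∅) ↔ ⋂ σ : ι → Bool, f (zeroOneAssign σ) = ∅ :=
  ⟨fun h => Set.subset_empty_iff.1 (hf.isLeast_range.2 h), fun h => h ▸ hf.isLeast_range.1⟩

end Pointwise

theorem boole_elimination (U : Type*) (k : ℕ)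
    (f : (Fin k → Set U) → Set U) (hf : IsTermFun U k f) :
    (∃ x : Fin k → Set U, f x = ∅) ↔ ⋂ σ : Fin k → Bool, f (starAssign σ) = ∅ :=
  boole_elimination_general hf.isPointwise
end

section
/- (Parametric solutions for systems of basic formulas) Let U be a type, n : ℕ, and let a, b : Set U, c, d : Fin n → Set U, and x : Set U. Then [(a ∩ x) ∪ (b ∩ xᶜ) = ∅ and for every i, (c i ∩ x) ∪ (d i ∩ xᶜ) ≠ ∅] holds if and only if there exist w : Set U and v : Fin n → Set U such that: a ∩ b = ∅; for every i, v i ≠ ∅ and v i ⊆ (c i ∩ aᶜ) ∪ (d i ∩ bᶜ); for all i ≠ j, v i ∩ v j ⊆ (c i ∪ d j) ∩ (c j ∪ d i); and x = (w ∩ (a ∪ ⋃ i, v i ∩ (c i)ᶜ)ᶜ) ∪ (wᶜ ∩ (b ∪ ⋃ i, v i ∩ (d i)ᶜ)). -/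
/-!
The disequation `c ⊓ x ⊔ d ⊓ xᶜ ≠ ⊥` says that some `v ≠ ⊥` lies below the left-hand side. For a
fixed `v` this is the interval condition `v ⊓ dᶜ ≤ x ≤ (v ⊓ cᶜ)ᶜ`, of the same kind as the
condition `b ≤ x ≤ aᶜ` expressed by the equation. With one parameter `v i` per disequation, the
system therefore becomes a single interval `B ≤ x ≤ Aᶜ`, which is nonempty iff `A` and `B` are
disjoint and is then parametrized by Schröder's formula `x = w ⊓ Aᶜ ⊔ wᶜ ⊓ B`. Disjointness of the
joins `A` and `B`, tested term by term, gives the conditions on `a`, `b` and the `v i`.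
-/

theorem forall_ne_bot_iff_exists_le {α : Type*} [PartialOrder α] [OrderBot α] {ι : Sort*}
    {p : ι → α} : (∀ i, p i ≠ ⊥) ↔ ∃ v : ι → α, (∀ i, v i ≠ ⊥) ∧ ∀ i, v i ≤ p i :=
  ⟨fun h ↦ ⟨p, h, fun _ ↦ le_rfl⟩, fun ⟨_, hv, hvp⟩ i ↦ ne_bot_of_le_ne_bot (hv i) (hvp i)⟩

section BooleanAlgebra

variable {α : Type*} [BooleanAlgebra α] {a b c d u v x : α}

theorem inf_sup_inf_compl_eq_bot_iff : a ⊓ x ⊔ b ⊓ xᶜ = ⊥ ↔ b ≤ x ∧ x ≤ aᶜ := by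
  rw [sup_eq_bot_iff, ← disjoint_iff, ← disjoint_iff, disjoint_compl_right_iff,
    ← le_compl_iff_disjoint_left, and_comm]

theorem le_and_le_compl_iff_exists_eq :
    b ≤ x ∧ x ≤ aᶜ ↔ Disjoint a b ∧ ∃ w, x = w ⊓ aᶜ ⊔ wᶜ ⊓ b := by
  constructor
  · rintro ⟨hbx, hxa⟩
    refine ⟨le_compl_iff_disjoint_left.mp (hbx.trans hxa), x, ?_⟩
    rw [inf_eq_left.mpr hxa, (disjoint_compl_left_iff.mpr hbx).eq_bot, sup_bot_eq]
  · rintro ⟨hab, w, rfl⟩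
    have hba : b ≤ aᶜ := le_compl_iff_disjoint_left.mpr hab
    refine ⟨?_, sup_le inf_le_right (inf_le_right.trans hba)⟩
    calc b = w ⊓ b ⊔ wᶜ ⊓ b := by rw [← inf_sup_right, sup_compl_eq_top, top_inf_eq]
      _ ≤ w ⊓ aᶜ ⊔ wᶜ ⊓ b := by gcongr

theorem disjoint_inf_compl_inf_compl_iff :
    Disjoint (u ⊓ cᶜ) (v ⊓ dᶜ) ↔ u ⊓ v ≤ c ⊔ d := by
  rw [disjoint_iff, inf_inf_inf_comm, ← compl_sup, ← disjoint_iff, disjoint_compl_right_iff]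

theorem forall_ne_inf_le_inf_sup_sup_iff {ι : Sort*} {c d v : ι → α} :
    (∀ i j, i ≠ j → v i ⊓ v j ≤ (c i ⊔ d j) ⊓ (c j ⊔ d i)) ↔
      ∀ i j, i ≠ j → Disjoint (v i ⊓ (c i)ᶜ) (v j ⊓ (d j)ᶜ) := by
  simp only [disjoint_inf_compl_inf_compl_iff, le_inf_iff]
  refine ⟨fun h i j hij ↦ (h i j hij).1, fun h i j hij ↦ ⟨h i j hij, ?_⟩⟩
  rw [inf_comm]
  exact h j i hij.symm

theorem disjoint_inf_compl_right_iff : Disjoint a (v ⊓ dᶜ) ↔ v ≤ aᶜ ⊔ d := by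
  simpa using disjoint_inf_compl_inf_compl_iff (u := ⊤) (c := aᶜ) (v := v) (d := d)

theorem disjoint_inf_compl_left_iff : Disjoint (v ⊓ cᶜ) b ↔ v ≤ c ⊔ bᶜ := by
  rw [disjoint_comm, disjoint_inf_compl_right_iff, sup_comm]

theorem le_inf_compl_sup_inf_compl_iff (hab : Disjoint a b) :
    v ≤ c ⊓ aᶜ ⊔ d ⊓ bᶜ ↔
      Disjoint a (v ⊓ dᶜ) ∧ Disjoint (v ⊓ cᶜ) b ∧ Disjoint (v ⊓ cᶜ) (v ⊓ dᶜ) := by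
  have hab_top : aᶜ ⊔ bᶜ = ⊤ := by rw [← compl_inf, hab.eq_bot, compl_bot]
  rw [disjoint_inf_compl_right_iff, disjoint_inf_compl_left_iff, disjoint_inf_compl_inf_compl_iff,
    inf_idem, sup_inf_left, sup_inf_right, sup_inf_right, hab_top, inf_top_eq]
  simp only [le_inf_iff]
  tauto

theorem le_inf_sup_inf_compl_iff :
    v ≤ c ⊓ x ⊔ d ⊓ xᶜ ↔ v ⊓ dᶜ ≤ x ∧ x ≤ (v ⊓ cᶜ)ᶜ := by
  have le_iff := le_inf_compl_sup_inf_compl_iff (v := v) (c := c) (d := d)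
    (disjoint_compl_left (a := x))
  rw [compl_compl, disjoint_compl_left_iff, ← le_compl_iff_disjoint_left] at le_iff
  rw [le_iff, and_congr_right_iff, and_iff_left_iff_imp]
  exact fun hdx hxc ↦ le_compl_iff_disjoint_left.mp (hdx.trans hxc)

end BooleanAlgebra

section CompleteBooleanAlgebra

variable {α : Type*} [CompleteBooleanAlgebra α] {ι : Sort*} {a b x : α} {c d v : ι → α}

theorem sup_iSup_le_and_le_compl_iff :
    (b ⊔ ⨆ i, v i ⊓ (d i)ᶜ) ≤ x ∧ x ≤ (a ⊔ ⨆ i, v i ⊓ (c i)ᶜ)ᶜ ↔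
      (b ≤ x ∧ x ≤ aᶜ) ∧ ∀ i, v i ≤ c i ⊓ x ⊔ d i ⊓ xᶜ := by
  simp only [le_inf_sup_inf_compl_iff, compl_sup, compl_iSup, sup_le_iff, iSup_le_iff, le_inf_iff,
    le_iInf_iff, forall_and]
  exact and_and_and_comm

theorem disjoint_sup_iSup_sup_iSup_iff :
    Disjoint (a ⊔ ⨆ i, v i ⊓ (c i)ᶜ) (b ⊔ ⨆ i, v i ⊓ (d i)ᶜ) ↔
      Disjoint a b ∧ (∀ i, v i ≤ c i ⊓ aᶜ ⊔ d i ⊓ bᶜ) ∧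
        ∀ i j, i ≠ j → v i ⊓ v j ≤ (c i ⊔ d j) ⊓ (c j ⊔ d i) := by
  rw [forall_ne_inf_le_inf_sup_sup_iff]
  simp only [disjoint_sup_left, disjoint_sup_right, iSup_disjoint_iff, disjoint_iSup_iff]
  constructor
  · rintro ⟨⟨hab, hcb⟩, hd⟩
    exact ⟨hab, fun i ↦ (le_inf_compl_sup_inf_compl_iff hab).mpr ⟨(hd i).1, hcb i, (hd i).2 i⟩,
      fun i j _ ↦ (hd j).2 i⟩
  · rintro ⟨hab, hv, hne⟩
    have hv' i := (le_inf_compl_sup_inf_compl_iff hab).mp (hv i)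
    refine ⟨⟨hab, fun i ↦ (hv' i).2.1⟩, fun j ↦ ⟨(hv' j).1, fun i ↦ ?_⟩⟩
    obtain rfl | hij := eq_or_ne i j
    exacts [(hv' i).2.2, hne i j hij]

theorem parametric_solutions_general (a b : α) (c d : ι → α) (x : α) :
    (a ⊓ x ⊔ b ⊓ xᶜ = ⊥ ∧ ∀ i, c i ⊓ x ⊔ d i ⊓ xᶜ ≠ ⊥) ↔
    ∃ (w : α) (v : ι → α),
      a ⊓ b = ⊥ ∧
      (∀ i, v i ≠ ⊥ ∧ v i ≤ c i ⊓ aᶜ ⊔ d i ⊓ bᶜ) ∧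
      (∀ i j, i ≠ j → v i ⊓ v j ≤ (c i ⊔ d j) ⊓ (c j ⊔ d i)) ∧
      x = w ⊓ (a ⊔ ⨆ i, v i ⊓ (c i)ᶜ)ᶜ ⊔ wᶜ ⊓ (b ⊔ ⨆ i, v i ⊓ (d i)ᶜ) := by
  rw [inf_sup_inf_compl_eq_bot_iff, forall_ne_bot_iff_exists_le, ← exists_and_left, exists_comm]
  refine exists_congr fun v ↦ ?_
  rw [and_left_comm, ← sup_iSup_le_and_le_compl_iff, le_and_le_compl_iff_exists_eq,
    disjoint_sup_iSup_sup_iSup_iff, disjoint_iff]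
  simp only [forall_and, exists_and_left]
  tauto

end CompleteBooleanAlgebra

theorem parametric_solutions (U : Type*) (n : ℕ) (a b : Set U)
    (c d : Fin n → Set U) (x : Set U) :
    ((a ∩ x) ∪ (b ∩ xᶜ) = ∅ ∧ ∀ i, (c i ∩ x) ∪ (d i ∩ xᶜ) ≠ ∅) ↔
    (∃ (w : Set U) (v : Fin n → Set U),
      a ∩ b = ∅ ∧
      (∀ i, v i ≠ ∅ ∧ v i ⊆ (c i ∩ aᶜ) ∪ (d i ∩ bᶜ)) ∧
      (∀ i j, i ≠ j → v i ∩ v j ⊆ (c i ∪ d j) ∩ (c j ∪ d i)) ∧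
      x = (w ∩ (a ∪ ⋃ i, v i ∩ (c i)ᶜ)ᶜ) ∪ (wᶜ ∩ (b ∪ ⋃ i, v i ∩ (d i)ᶜ))) := by
  exact parametric_solutions_general a b c d x
end

section
/- (V-translation of elimination) For any type U and any sets a, b, c, d, V : Set U, there exists x : Set U with ((a ∩ x) ∪ (b ∩ xᶜ)) ∪ (V ∩ ((c ∩ x) ∪ (d ∩ xᶜ))ᶜ) = ∅ if and only if (a ∩ b) ∪ (V ∩ ((c ∩ aᶜ) ∪ (d ∩ bᶜ))ᶜ) = ∅. (This is the complete result of eliminating x from the V-translated system, and it splits into the equation a ∩ b = ∅ together with the V-equation V ∩ ((c ∩ aᶜ) ∪ (d ∩ bᶜ))ᶜ = ∅, matching Schröder's elimination result.) -/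
/-!
For fixed `x`, Boole's expansion `(a ⊓ x) ⊔ (b ⊓ xᶜ)` is a homomorphism of Boolean algebras in the
pair of coefficients `(a, b)`. The translated system is therefore itself a single expansion, with
coefficients `a ⊔ (V ⊓ cᶜ)` and `b ⊔ (V ⊓ dᶜ)`, and Boole's elimination rule says that it vanishes
for some `x` exactly when the meet of these two coefficients does.
-/

section BooleanAlgebra

variable {α : Type*} [BooleanAlgebra α]

/-- Boole's expansion about `x` of a polynomial `p` in one variable over a Boolean algebra, written
in terms of the coefficients `a = p ⊤` and `b = p ⊥`. -/
def booleExpansion (a b x : α) : α :=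
  (a ⊓ x) ⊔ (b ⊓ xᶜ)

theorem booleExpansion_self (a x : α) : booleExpansion a a x = a := by
  rw [booleExpansion, ← inf_sup_left, sup_compl_eq_top, inf_top_eq]

theorem booleExpansion_sup_booleExpansion (a b c d x : α) :
    booleExpansion a b x ⊔ booleExpansion c d x = booleExpansion (a ⊔ c) (b ⊔ d) x := by
  simp only [booleExpansion, inf_sup_right, sup_sup_sup_comm]

theorem booleExpansion_inf_booleExpansion (a b c d x : α) :
    booleExpansion a b x ⊓ booleExpansion c d x = booleExpansion (a ⊓ c) (b ⊓ d) x := by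
  have mixed_left : (a ⊓ x) ⊓ (d ⊓ xᶜ) = ⊥ := by
    rw [inf_inf_inf_comm, inf_compl_eq_bot, inf_bot_eq]
  have mixed_right : (b ⊓ xᶜ) ⊓ (c ⊓ x) = ⊥ := by
    rw [inf_inf_inf_comm, compl_inf_eq_bot, inf_bot_eq]
  calc booleExpansion a b x ⊓ booleExpansion c d x
      = ((a ⊓ x) ⊓ (c ⊓ x)) ⊔ ((b ⊓ xᶜ) ⊓ (d ⊓ xᶜ)) := by
        simp only [booleExpansion, inf_sup_left, inf_sup_right, mixed_left, mixed_right,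
          sup_bot_eq, bot_sup_eq]
    _ = booleExpansion (a ⊓ c) (b ⊓ d) x := by
        rw [booleExpansion, inf_inf_inf_comm, inf_idem, inf_inf_inf_comm, inf_idem]

theorem inf_booleExpansion (e a b x : α) :
    e ⊓ booleExpansion a b x = booleExpansion (e ⊓ a) (e ⊓ b) x := by
  rw [← booleExpansion_inf_booleExpansion, booleExpansion_self]

theorem compl_booleExpansion (a b x : α) :
    (booleExpansion a b x)ᶜ = booleExpansion aᶜ bᶜ x := by
  refine (IsCompl.of_eq ?_ ?_).compl_eq
  · rw [booleExpansion_inf_booleExpansion, inf_compl_eq_bot, inf_compl_eq_bot, booleExpansion_self]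
  · rw [booleExpansion_sup_booleExpansion, sup_compl_eq_top, sup_compl_eq_top, booleExpansion_self]

theorem booleExpansion_eq_bot_iff {a b x : α} :
    booleExpansion a b x = ⊥ ↔ b ≤ x ∧ x ≤ aᶜ := by
  rw [booleExpansion, sup_eq_bot_iff, ← disjoint_iff, ← disjoint_iff, disjoint_compl_right_iff,
    ← le_compl_iff_disjoint_left, and_comm]

theorem exists_booleExpansion_eq_bot_iff {a b : α} :
    (∃ x, booleExpansion a b x = ⊥) ↔ a ⊓ b = ⊥ := by
  simp only [booleExpansion_eq_bot_iff]
  rw [← disjoint_iff, ← le_compl_iff_disjoint_left]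
  exact ⟨fun ⟨_, hbx, hxa⟩ ↦ hbx.trans hxa, fun hba ↦ ⟨b, le_rfl, hba⟩⟩

theorem booleExpansion_sup_inf_compl_booleExpansion (a b c d V x : α) :
    booleExpansion a b x ⊔ (V ⊓ (booleExpansion c d x)ᶜ) =
      booleExpansion (a ⊔ (V ⊓ cᶜ)) (b ⊔ (V ⊓ dᶜ)) x := by
  rw [compl_booleExpansion, inf_booleExpansion, booleExpansion_sup_booleExpansion]

end BooleanAlgebra

theorem sup_inf_inf_sup_inf {α : Type*} [DistribLattice α] (a b c d v : α) :
    (a ⊔ (v ⊓ c)) ⊓ (b ⊔ (v ⊓ d)) = (a ⊓ b) ⊔ (v ⊓ ((a ⊔ c) ⊓ (b ⊔ d))) := by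
  have absorb : (a ⊓ b) ⊔ ((a ⊔ c) ⊓ (b ⊔ d)) = (a ⊔ c) ⊓ (b ⊔ d) :=
    sup_eq_right.mpr (inf_le_inf le_sup_left le_sup_left)
  calc (a ⊔ (v ⊓ c)) ⊓ (b ⊔ (v ⊓ d))
      = ((a ⊔ v) ⊓ (b ⊔ v)) ⊓ ((a ⊔ c) ⊓ (b ⊔ d)) := by
        rw [sup_inf_left, sup_inf_left, inf_inf_inf_comm]
    _ = ((a ⊓ b) ⊔ v) ⊓ ((a ⊓ b) ⊔ ((a ⊔ c) ⊓ (b ⊔ d))) := by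
        rw [← sup_inf_right, absorb]
    _ = (a ⊓ b) ⊔ (v ⊓ ((a ⊔ c) ⊓ (b ⊔ d))) := (sup_inf_left ..).symm

theorem V_translation_elimination_general {α : Type*} [BooleanAlgebra α] (a b c d V : α) :
    (∃ x : α, booleExpansion a b x ⊔ (V ⊓ (booleExpansion c d x)ᶜ) = ⊥) ↔
      (a ⊓ b) ⊔ (V ⊓ ((c ⊓ aᶜ) ⊔ (d ⊓ bᶜ))ᶜ) = ⊥ := by
  have compl_coeffs : ((c ⊓ aᶜ) ⊔ (d ⊓ bᶜ))ᶜ = (a ⊔ cᶜ) ⊓ (b ⊔ dᶜ) := by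
    simp only [compl_sup, compl_inf, compl_compl, sup_comm]
  simp only [booleExpansion_sup_inf_compl_booleExpansion]
  rw [exists_booleExpansion_eq_bot_iff, sup_inf_inf_sup_inf, compl_coeffs]

theorem V_translation_elimination (U : Type*) (a b c d V : Set U) :
    (∃ x : Set U,
      ((a ∩ x) ∪ (b ∩ xᶜ)) ∪ (V ∩ ((c ∩ x) ∪ (d ∩ xᶜ))ᶜ) = ∅) ↔
    (a ∩ b) ∪ (V ∩ ((c ∩ aᶜ) ∪ (d ∩ bᶜ))ᶜ) = ∅ :=
  V_translation_elimination_general a b c d V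
end
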